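/- arXiv:1606.06917 — 2 statements merged into one kernel-verified Lean document; each statement's English description precedes it below -/
import Mathlib

section
/- Let L ≥ M ≥ 0 be integers, η, ξ₊, ξ₋ ∈ ℂ, and let x_1,…,x_L, z_1,…,z_M ∈ ℂ be nonzero with x_1²,…,x_L² pairwise distinct, z_1²,…,z_M² pairwise distinct, and (x_i ± η/2)² ≠ z_k² and (z_k ± η/2)² ≠ x_i² for all i,k. Then A_{{x}}[f_{ξ₊,ξ₋,{z}}] = (−1)^M · 2^{L−M} · ∏_{j=0}^{L−M−1}(ξ₊+ξ₋+jη) · A_{{z}}[f_{−ξ₊+η/2, −ξ₋+η/2, {x}}]. -/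
open Finset

/-- `A_{{u}}[f]` as a ratio of determinants. -/
noncomputable def Afun {K : ℕ} (η : ℂ) (u : Fin K → ℂ) (f : ℂ → ℂ) : ℂ :=
  Matrix.det (Matrix.of fun i j : Fin K =>
      f (u i) * (u i + η / 2) ^ (2 * (j : ℕ)) + f (-u i) * (u i - η / 2) ^ (2 * (j : ℕ)))
    / Matrix.det (Matrix.of fun i j : Fin K => u i ^ (2 * (j : ℕ)))

/-- `f_{ξ₊,ξ₋,{v}}(λ) = ((λ+ξ₊)(λ+ξ₋)/λ) ∏_m (λ²−v_m²)/((λ+η/2)²−v_m²)`. -/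
noncomputable def fFun (η ξp ξm : ℂ) {M : ℕ} (v : Fin M → ℂ) (lam : ℂ) : ℂ :=
  ((lam + ξp) * (lam + ξm) / lam) *
    ∏ m, ((lam ^ 2 - v m ^ 2) / ((lam + η / 2) ^ 2 - v m ^ 2))


open Polynomial in
lemma lag_sum {n : ℕ} (y : Fin n → ℂ) (hy : Function.Injective y) (P : ℂ[X])
    (hP : P.natDegree < n) :
    ∑ i, Lagrange.nodalWeight univ y i * P.eval (y i) = P.coeff (n - 1) := by
  have h := Lagrange.coeff_eq_sum (s := univ) (v := y) hy.injOn (P := P) (by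
    rw [Finset.card_univ, Fintype.card_fin]
    exact lt_of_le_of_lt degree_le_natDegree (by exact_mod_cast hP))
  rw [Finset.card_univ, Fintype.card_fin] at h
  rw [h]
  refine Finset.sum_congr rfl fun i _ => ?_
  rw [Lagrange.nodalWeight, Finset.prod_inv_distrib, div_eq_mul_inv, mul_comm]

/-- sign of the anti-diagonal -/
noncomputable def epsSign (n : ℕ) : ℂ := ∏ i ∈ range n, (-1 : ℂ) ^ i

lemma epsSign_sq (n : ℕ) : epsSign n * epsSign n = 1 := by
  rw [epsSign, ← Finset.prod_mul_distrib]
  refine Finset.prod_eq_one fun i _ => ?_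
  rw [← mul_pow]; norm_num

lemma epsSign_add (m n : ℕ) : epsSign (m + n) = epsSign m * epsSign n * (-1) ^ (m * n) := by
  rw [epsSign, Finset.prod_range_add, epsSign, epsSign]
  simp_rw [pow_add]
  rw [Finset.prod_mul_distrib, Finset.prod_const, Finset.card_range, pow_mul]
  ring

lemma det_anti : ∀ (n : ℕ) (H : Matrix (Fin n) (Fin n) ℂ)
    (_ : ∀ a b : Fin n, (a : ℕ) + b + 1 < n → H a b = 0),
    H.det = epsSign n * ∏ b : Fin n, H b.rev b := by
  intro n
  induction n with
  | zero => intro H _; simp [epsSign]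
  | succ n ih =>
    intro H hH
    rw [Matrix.det_succ_row_zero, Finset.sum_eq_single (Fin.last n)]
    · rw [ih, Fin.prod_univ_castSucc]
      · simp only [Fin.val_last, Matrix.submatrix_apply, Fin.succAbove_last, Fin.rev_castSucc,
          Fin.rev_last, epsSign, Finset.prod_range_succ]
        ring
      · intro a b hab
        simp only [Matrix.submatrix_apply, Fin.succAbove_last]
        apply hH
        simp; omega
    · intro b _ hb
      have : (b : ℕ) ≠ n := fun h => hb (Fin.ext (by simpa using h))
      rw [hH 0 b (by have := b.2; simp; omega)]
      simp
    · simp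

lemma vdm_sq {n : ℕ} (y : Fin n → ℂ) (hy : Function.Injective y) :
    (Matrix.vandermonde y).det * (Matrix.vandermonde y).det
      * ∏ i, Lagrange.nodalWeight univ y i = epsSign n := by
  have h1 : ∀ a b, ((Matrix.vandermonde y).transpose
      * Matrix.diagonal (Lagrange.nodalWeight univ y) * Matrix.vandermonde y) a b
      = ∑ i, Lagrange.nodalWeight univ y i * (Polynomial.X ^ ((a : ℕ) + b) : Polynomial ℂ).eval (y i) := by
    intro a b
    rw [Matrix.mul_apply]
    refine Finset.sum_congr rfl fun i _ => ?_
    simp [Matrix.mul_diagonal, Matrix.vandermonde_apply, pow_add]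
    ring
  have h := det_anti n ((Matrix.vandermonde y).transpose
      * Matrix.diagonal (Lagrange.nodalWeight univ y) * Matrix.vandermonde y) (by
    intro a b hab
    rw [h1, lag_sum y hy _ (by simp; omega), Polynomial.coeff_X_pow, if_neg (by omega)])
  rw [Matrix.det_mul, Matrix.det_mul, Matrix.det_transpose, Matrix.det_diagonal] at h
  rw [Finset.prod_eq_one (s := univ) (f := fun b : Fin n => ((Matrix.vandermonde y).transpose
      * Matrix.diagonal (Lagrange.nodalWeight univ y) * Matrix.vandermonde y) b.rev b)] at h
  · rw [mul_one] at h
    rw [← h]; ring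
  · intro b _
    have := b.2
    rw [h1, lag_sum y hy _ (by simp; omega), Polynomial.coeff_X_pow, if_pos]
    simp; omega

open Polynomial in
lemma even_odd (h : ℂ) (j : ℕ) : ∃ E O : ℂ[X], E.natDegree ≤ j ∧ E.coeff j = 1 ∧
    (X * O).natDegree ≤ j ∧ (X * O).coeff j = 2 * j * h ∧
    (∀ x : ℂ, (x + h) ^ (2 * j) = E.eval (x ^ 2) + x * O.eval (x ^ 2)) ∧
    (∀ x : ℂ, (x - h) ^ (2 * j) = E.eval (x ^ 2) - x * O.eval (x ^ 2)) := by
  induction j with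
  | zero => exact ⟨1, 0, by simp, by simp, by simp, by simp, by simp, by simp⟩
  | succ j ih =>
    obtain ⟨E, O, h1, h2, h3, h4, h5, h6⟩ := ih
    have e0 : ∀ {p : ℂ[X]}, p.natDegree ≤ j → p.coeff (j + 1) = 0 := fun hp =>
      coeff_eq_zero_of_natDegree_lt (by omega)
    have hO : O.natDegree ≤ j := by
      rw [natDegree_le_iff_coeff_eq_zero]
      intro N hN
      rw [← coeff_X_mul]
      exact coeff_eq_zero_of_natDegree_lt (by omega)
    refine ⟨X * E + C (h ^ 2) * E + C (2 * h) * (X * O),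
      X * O + C (h ^ 2) * O + C (2 * h) * E, ?_, ?_, ?_, ?_, ?_, ?_⟩
    · refine natDegree_add_le_of_degree_le (natDegree_add_le_of_degree_le ?_ ?_) ?_
      · exact natDegree_mul_le.trans (by rw [natDegree_X]; omega)
      · exact (natDegree_C_mul_le _ _).trans (by omega)
      · exact (natDegree_C_mul_le _ _).trans (by omega)
    · simp only [coeff_add, coeff_C_mul]
      rw [e0 h3, e0 h1, coeff_X_mul, h2]; ring
    · refine natDegree_mul_le.trans ?_
      have : (X * O + C (h ^ 2) * O + C (2 * h) * E).natDegree ≤ j := by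
        refine natDegree_add_le_of_degree_le (natDegree_add_le_of_degree_le h3 ?_) ?_
        · exact (natDegree_C_mul_le _ _).trans hO
        · exact (natDegree_C_mul_le _ _).trans h1
      rw [natDegree_X]; omega
    · rw [coeff_X_mul]
      simp only [coeff_add, coeff_C_mul]
      rw [h4, h2, ← coeff_X_mul, e0 h3]; push_cast; ring
    · intro x
      rw [mul_add, pow_add, h5]; simp; ring
    · intro x
      rw [mul_add, pow_add, h6]; simp; ring

open Polynomial in
lemma exists_q (η a b : ℂ) (j : ℕ) : ∃ q : ℂ[X], q.natDegree ≤ j ∧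
    q.coeff j = 2 * (a + b + j * η) ∧
    ∀ x : ℂ, x * q.eval (x ^ 2) = (x + a) * (x + b) * (x + η / 2) ^ (2 * j)
      - (x - a) * (x - b) * (x - η / 2) ^ (2 * j) := by
  obtain ⟨E, O, h1, h2, h3, h4, h5, h6⟩ := even_odd (η / 2) j
  have hO : ∀ N, j ≤ N → O.coeff N = 0 := by
    intro N hN
    rw [← coeff_X_mul]
    exact coeff_eq_zero_of_natDegree_lt (by omega)
  have hO' : O.natDegree ≤ j := by
    rw [natDegree_le_iff_coeff_eq_zero]
    intro N hN
    exact hO N hN.le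
  refine ⟨C 2 * (X * O + C (a * b) * O + C (a + b) * E), ?_, ?_, ?_⟩
  · refine (natDegree_C_mul_le _ _).trans ?_
    refine natDegree_add_le_of_degree_le (natDegree_add_le_of_degree_le h3 ?_) ?_
    · exact (natDegree_C_mul_le _ _).trans hO'
    · exact (natDegree_C_mul_le _ _).trans h1
  · simp only [coeff_add, coeff_C_mul]
    rw [h4, h2, hO j le_rfl]; ring
  · intro x
    rw [h5, h6]; simp; ring

/-- The kernel. -/
noncomputable def Kker (η a b x z : ℂ) : ℂ :=
  (x + a) * (x + b) / x / ((x + η / 2) ^ 2 - z ^ 2)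
    + (-x + a) * (-x + b) / (-x) / ((-x + η / 2) ^ 2 - z ^ 2)

lemma Kker_symm (η a b x z : ℂ) (hx : x ≠ 0) (hz : z ≠ 0)
    (h1 : (x + η / 2) ^ 2 ≠ z ^ 2) (h2 : (x - η / 2) ^ 2 ≠ z ^ 2)
    (h3 : (z + η / 2) ^ 2 ≠ x ^ 2) (h4 : (z - η / 2) ^ 2 ≠ x ^ 2) :
    Kker η (-a + η / 2) (-b + η / 2) z x = Kker η a b x z := by
  have e2 : (-x + η / 2) ^ 2 - z ^ 2 ≠ 0 := by
    rw [sub_ne_zero]; intro h; apply h2; rw [← h]; ring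
  have e4 : (-z + η / 2) ^ 2 - x ^ 2 ≠ 0 := by
    rw [sub_ne_zero]; intro h; apply h4; rw [← h]; ring
  have e1 := sub_ne_zero.2 h1
  have e3 := sub_ne_zero.2 h3
  have hD : ((x + η / 2) ^ 2 - z ^ 2) * ((-x + η / 2) ^ 2 - z ^ 2)
    = ((z + η / 2) ^ 2 - x ^ 2) * ((-z + η / 2) ^ 2 - x ^ 2) := by ring
  have l : Kker η a b x z = 2 * ((a + b - η) * x ^ 2 + (a + b) * ((η / 2) ^ 2 - z ^ 2) - η * a * b)
      / (((x + η / 2) ^ 2 - z ^ 2) * ((-x + η / 2) ^ 2 - z ^ 2)) := by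
    rw [eq_div_iff (mul_ne_zero e1 e2), Kker]
    generalize hA : (x + η / 2) ^ 2 - z ^ 2 = A at *
    generalize hB : (-x + η / 2) ^ 2 - z ^ 2 = B at *
    field_simp
    rw [← hA, ← hB]
    ring
  have r : Kker η (-a + η / 2) (-b + η / 2) z x
      = 2 * ((a + b - η) * x ^ 2 + (a + b) * ((η / 2) ^ 2 - z ^ 2) - η * a * b)
      / (((z + η / 2) ^ 2 - x ^ 2) * ((-z + η / 2) ^ 2 - x ^ 2)) := by
    rw [eq_div_iff (mul_ne_zero e3 e4), Kker]
    generalize hA : (z + η / 2) ^ 2 - x ^ 2 = A at *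
    generalize hB : (-z + η / 2) ^ 2 - x ^ 2 = B at *
    field_simp
    rw [← hA, ← hB]
    ring
  rw [l, r, hD]

lemma fFun_mul (η a b : ℂ) {M : ℕ} (z : Fin M → ℂ) (x : ℂ)
    (h : ∀ k, (x + η / 2) ^ 2 ≠ z k ^ 2) :
    fFun η a b z x = (x + a) * (x + b) / x *
      ((Lagrange.nodal univ fun k => z k ^ 2).eval (x ^ 2)
        / (Lagrange.nodal univ fun k => z k ^ 2).eval ((x + η / 2) ^ 2)) := by
  rw [fFun, Lagrange.eval_nodal, Lagrange.eval_nodal, Finset.prod_div_distrib]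

lemma nodal_ne {M : ℕ} (z : Fin M → ℂ) (t : ℂ)
    (h : ∀ k, t ≠ z k ^ 2) : (Lagrange.nodal univ fun k => z k ^ 2).eval t ≠ 0 :=
  Lagrange.eval_nodal_not_at_node (fun k _ => h k)

/-- expansion of the `z`-side matrix -/
lemma zside (η a b : ℂ) {L : ℕ} (x : Fin L → ℂ) (hx : Function.Injective fun i => x i ^ 2)
    (z : ℂ) (h1 : ∀ i, (z + η / 2) ^ 2 ≠ x i ^ 2) (h2 : ∀ i, (z - η / 2) ^ 2 ≠ x i ^ 2)
    (j : ℕ) (hj : j < L) :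
    fFun η a b x z * (z + η / 2) ^ (2 * j) + fFun η a b x (-z) * (z - η / 2) ^ (2 * j)
      = (Lagrange.nodal univ fun k => x k ^ 2).eval (z ^ 2) *
        ∑ i, Kker η a b z (x i) * Lagrange.nodalWeight univ (fun k => x k ^ 2) i
          * (x i ^ 2) ^ j := by
  have h2' : ∀ i, (-z + η / 2) ^ 2 ≠ x i ^ 2 := by
    intro i h; apply h2 i; rw [← h]; ring
  have key : ∀ t : ℂ, (∀ i, t ≠ x i ^ 2) →
      t ^ j = (Lagrange.nodal univ fun k => x k ^ 2).eval t *
        ∑ i, Lagrange.nodalWeight univ (fun k => x k ^ 2) i * (t - x i ^ 2)⁻¹ * (x i ^ 2) ^ j := by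
    intro t ht
    have e := Lagrange.eq_interpolate (s := univ) (v := fun k => x k ^ 2)
      (f := (Polynomial.X ^ j : Polynomial ℂ)) hx.injOn (by simpa using hj)
    have := Lagrange.eval_interpolate_not_at_node (s := univ) (v := fun k => x k ^ 2) (x := t)
      (fun i => (Polynomial.X ^ j : Polynomial ℂ).eval (x i ^ 2)) (fun i _ => ht i)
    rw [← e] at this
    simpa using this
  have n1 := nodal_ne x _ h1
  have n2 := nodal_ne x _ h2'
  have e2 : (z - η / 2) ^ (2 * j) = ((-z + η / 2) ^ 2) ^ j := by
    rw [pow_mul]; congr 1; ring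
  rw [e2, pow_mul, key _ h1, key _ h2', fFun_mul _ _ _ _ _ h1, fFun_mul _ _ _ _ _ h2', neg_sq]
  generalize (Lagrange.nodal univ fun k => x k ^ 2).eval ((z + η / 2) ^ 2) = A at *
  generalize (Lagrange.nodal univ fun k => x k ^ 2).eval ((-z + η / 2) ^ 2) = B at *
  generalize (Lagrange.nodal univ fun k => x k ^ 2).eval (z ^ 2) = D at *
  have s : ∀ g X S : ℂ, X ≠ 0 → g * (D / X) * (X * S) = D * (g * S) := by
    intro g X S hX; field_simp
  rw [s _ _ _ n1, s _ _ _ n2, ← mul_add, Finset.mul_sum, Finset.mul_sum, ← Finset.sum_add_distrib]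
  congr 1
  refine Finset.sum_congr rfl fun i _ => ?_
  rw [Kker]
  simp only [div_eq_mul_inv]
  ring

/-- the `x`-side operator on `Z / (w - z_k^2)` -/
lemma xside1 (η a b : ℂ) {M : ℕ} (z : Fin M → ℂ) (x : ℂ)
    (h1 : ∀ i, (x + η / 2) ^ 2 ≠ z i ^ 2) (h2 : ∀ i, (x - η / 2) ^ 2 ≠ z i ^ 2) (k : Fin M) :
    fFun η a b z x * (Lagrange.nodal (univ.erase k) fun k => z k ^ 2).eval ((x + η / 2) ^ 2)
      + fFun η a b z (-x) * (Lagrange.nodal (univ.erase k) fun k => z k ^ 2).eval ((x - η / 2) ^ 2)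
      = (Lagrange.nodal univ fun k => z k ^ 2).eval (x ^ 2) * Kker η a b x (z k) := by
  have h2' : ∀ i, (-x + η / 2) ^ 2 ≠ z i ^ 2 := by
    intro i h; apply h2 i; rw [← h]; ring
  have n1 := nodal_ne z _ h1
  have n2 := nodal_ne z _ h2'
  have e2 : (x - η / 2) ^ 2 = (-x + η / 2) ^ 2 := by ring
  have e : ∀ t, (Lagrange.nodal univ fun k => z k ^ 2).eval t
      = (t - z k ^ 2) * (Lagrange.nodal (univ.erase k) fun k => z k ^ 2).eval t := by
    intro t
    rw [Lagrange.nodal_eq_mul_nodal_erase (mem_univ k)]; simp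
  rw [e2, fFun_mul _ _ _ _ _ h1, fFun_mul _ _ _ _ _ h2', neg_sq, Kker]
  generalize (Lagrange.nodal univ fun k => z k ^ 2).eval (x ^ 2) = D at *
  rw [e] at n1 n2
  rw [e, e]
  have s : ∀ g d X : ℂ, d * X ≠ 0 → g * (D / (d * X)) * X = D * (g / d) := by
    intro g d X hX
    have h1 := left_ne_zero_of_mul hX
    have h2 := right_ne_zero_of_mul hX
    field_simp
  rw [s _ _ _ n1, s _ _ _ n2, ← mul_add]

lemma xside2 (η a b : ℂ) {M : ℕ} (z : Fin M → ℂ) (x : ℂ) (hx : x ≠ 0)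
    (h1 : ∀ i, (x + η / 2) ^ 2 ≠ z i ^ 2) (h2 : ∀ i, (x - η / 2) ^ 2 ≠ z i ^ 2) (j : ℕ)
    (q : Polynomial ℂ) (hq : ∀ x : ℂ, x * q.eval (x ^ 2) =
      (x + a) * (x + b) * (x + η / 2) ^ (2 * j) - (x - a) * (x - b) * (x - η / 2) ^ (2 * j)) :
    fFun η a b z x * ((Lagrange.nodal univ fun k => z k ^ 2) * Polynomial.X ^ j).eval ((x + η / 2) ^ 2)
      + fFun η a b z (-x) * ((Lagrange.nodal univ fun k => z k ^ 2) * Polynomial.X ^ j).eval ((x - η / 2) ^ 2)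
      = (Lagrange.nodal univ fun k => z k ^ 2).eval (x ^ 2) * q.eval (x ^ 2) := by
  have h2' : ∀ i, (-x + η / 2) ^ 2 ≠ z i ^ 2 := by
    intro i h; apply h2 i; rw [← h]; ring
  have n1 := nodal_ne z _ h1
  have n2 := nodal_ne z _ h2'
  have e2 : (x - η / 2) ^ 2 = (-x + η / 2) ^ 2 := by ring
  have hq' := hq x
  rw [pow_mul, pow_mul, e2] at hq'
  rw [e2, fFun_mul _ _ _ _ _ h1, fFun_mul _ _ _ _ _ h2', neg_sq]
  simp only [Polynomial.eval_mul, Polynomial.eval_pow, Polynomial.eval_X]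
  generalize (Lagrange.nodal univ fun k => z k ^ 2).eval (x ^ 2) = D at *
  generalize (Lagrange.nodal univ fun k => z k ^ 2).eval ((x + η / 2) ^ 2) = A at *
  generalize (Lagrange.nodal univ fun k => z k ^ 2).eval ((-x + η / 2) ^ 2) = B at *
  generalize ((x + η / 2) ^ 2) ^ j = p1 at *
  generalize ((-x + η / 2) ^ 2) ^ j = p2 at *
  have : q.eval (x ^ 2) = ((x + a) * (x + b) * p1 - (x - a) * (x - b) * p2) / x := by
    rw [← hq']; field_simp
  rw [this]
  field_simp
  ring

/-- coefficient matrix of the basis `Z/(w-c_k)`, `Z w^b` -/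
noncomputable def Bpoly {M N : ℕ} (c : Fin M → ℂ) : Fin M ⊕ Fin N → Polynomial ℂ :=
  Sum.elim (fun k => Lagrange.nodal (univ.erase k) c)
    (fun b => Lagrange.nodal univ c * Polynomial.X ^ (b : ℕ))

lemma Bpoly_natDegree {M N : ℕ} (c : Fin M → ℂ) (j : Fin M ⊕ Fin N) :
    (Bpoly c j).natDegree < M + N := by
  rcases j with k | b
  · have := k.2
    simp only [Bpoly, Sum.elim_inl, Lagrange.natDegree_nodal, card_erase_of_mem (mem_univ k),
      card_univ, Fintype.card_fin]
    omega
  · have := b.2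
    simp only [Bpoly, Sum.elim_inr]
    refine lt_of_le_of_lt Polynomial.natDegree_mul_le ?_
    simp [Lagrange.natDegree_nodal]

lemma det_coeff {M N : ℕ} (c : Fin M → ℂ) (hc : Function.Injective c) :
    (Matrix.vandermonde c).det *
      (Matrix.of fun i j : Fin M ⊕ Fin N =>
        (Bpoly c j).coeff (finSumFinEquiv i : Fin (M + N))).det
      * ∏ k, Lagrange.nodalWeight univ c k = 1 := by
  set C11 : Matrix (Fin M) (Fin M) ℂ := Matrix.of fun i k =>
    (Lagrange.nodal (univ.erase k) c).coeff i with hC11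
  set C12 : Matrix (Fin M) (Fin N) ℂ := Matrix.of fun i b =>
    (Lagrange.nodal univ c * Polynomial.X ^ (b : ℕ)).coeff i
  set C22 : Matrix (Fin N) (Fin N) ℂ := Matrix.of fun i b =>
    (Lagrange.nodal univ c * Polynomial.X ^ (b : ℕ)).coeff (M + i)
  have hdeg : ∀ k : Fin M, (Lagrange.nodal (univ.erase k) c).natDegree < M := by
    intro k
    have := k.2
    rw [Lagrange.natDegree_nodal, card_erase_of_mem (mem_univ k), card_univ, Fintype.card_fin]
    omega
  have hblock : (Matrix.of fun i j : Fin M ⊕ Fin N =>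
        (Bpoly c j).coeff (finSumFinEquiv i : Fin (M + N)))
      = Matrix.fromBlocks C11 C12 0 C22 := by
    ext i j
    rcases i with i | i <;> rcases j with j | j
    · simp [Bpoly, C11]
    · simp [Bpoly, C12]
    · simp only [Bpoly, Matrix.of_apply, Sum.elim_inl, Matrix.fromBlocks_apply₂₁,
        Matrix.zero_apply, finSumFinEquiv_apply_right, Fin.val_natAdd]
      exact Polynomial.coeff_eq_zero_of_natDegree_lt (by have := hdeg j; omega)
    · simp [Bpoly, C22]
  have hZ : (Lagrange.nodal univ c).natDegree = M := by
    rw [Lagrange.natDegree_nodal, card_univ, Fintype.card_fin]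
  have h22 : C22.det = 1 := by
    rw [Matrix.det_of_upperTriangular]
    · refine Finset.prod_eq_one fun i _ => ?_
      simp only [C22, Matrix.of_apply, Polynomial.coeff_mul_X_pow]
      have := (Lagrange.nodal_monic (s := univ) (v := c)).coeff_natDegree
      rwa [hZ] at this
    · intro i j hij
      simp only [id] at hij
      simp only [C22, Matrix.of_apply]
      refine Polynomial.coeff_eq_zero_of_natDegree_lt
        (lt_of_le_of_lt Polynomial.natDegree_mul_le ?_)
      rw [hZ, Polynomial.natDegree_X_pow]
      have : (j : ℕ) < i := hij
      omega
  have h11 : Matrix.vandermonde c * C11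
      = Matrix.diagonal fun k => (Lagrange.nodal (univ.erase k) c).eval (c k) := by
    ext i k
    rw [Matrix.mul_apply]
    have : ∑ j, Matrix.vandermonde c i j * C11 j k
        = (Lagrange.nodal (univ.erase k) c).eval (c i) := by
      rw [Polynomial.eval_eq_sum_range' (hdeg k), ← Fin.sum_univ_eq_sum_range
        (fun j => (Lagrange.nodal (univ.erase k) c).coeff j * c i ^ j)]
      refine Finset.sum_congr rfl fun j _ => ?_
      simp [C11, Matrix.vandermonde_apply, mul_comm]
    rw [this]
    by_cases h : i = k
    · subst h; simp
    · rw [Matrix.diagonal_apply_ne _ h]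
      exact Lagrange.eval_nodal_at_node (by simp [h])
  rw [hblock, Matrix.det_fromBlocks_zero₂₁, h22, mul_one, ← Matrix.det_mul, h11,
    Matrix.det_diagonal, ← Finset.prod_mul_distrib]
  refine Finset.prod_eq_one fun k _ => ?_
  rw [Lagrange.nodalWeight_eq_eval_nodal_erase_inv, mul_inv_cancel₀]
  refine Lagrange.eval_nodal_not_at_node fun j hj h => ?_
  exact (Finset.mem_erase.1 hj).1 (hc h).symm

lemma det_G {M N : ℕ} (y : Fin (M + N) → ℂ) (hy : Function.Injective y)
    (K : Fin (M + N) → Fin M → ℂ) (q : Fin N → Polynomial ℂ)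
    (hq : ∀ b, (q b).natDegree ≤ b) :
    (Matrix.vandermonde y).det * (∏ i, Lagrange.nodalWeight univ y i) *
      (Matrix.of fun i j : Fin M ⊕ Fin N =>
        (Sum.elim (fun k => K (finSumFinEquiv i) k)
          (fun b => (q b).eval (y (finSumFinEquiv i))) j : ℂ)).det
    = (Matrix.of fun j k : Fin M =>
        ∑ i, K i k * Lagrange.nodalWeight univ y i * y i ^ (j : ℕ)).det
      * (epsSign N * ∏ b, (q b).coeff b) := by
  set P : Matrix (Fin M) (Fin M) ℂ := Matrix.of fun j k : Fin M =>
        ∑ i, K i k * Lagrange.nodalWeight univ y i * y i ^ (j : ℕ) with hP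
  set G := (Matrix.of fun i j : Fin M ⊕ Fin N =>
        (Sum.elim (fun k => K (finSumFinEquiv i) k)
          (fun b => (q b).eval (y (finSumFinEquiv i))) j : ℂ)) with hG
  set e : Fin M ⊕ Fin N ≃ Fin (M + N) := finSumFinEquiv with he
  set V := (Matrix.vandermonde y).submatrix e e with hV
  set D : Matrix (Fin M ⊕ Fin N) (Fin M ⊕ Fin N) ℂ :=
    Matrix.diagonal fun i => Lagrange.nodalWeight univ y (e i) with hD
  set H : Matrix (Fin N) (Fin N) ℂ := Matrix.of fun a b =>
    ∑ i, Lagrange.nodalWeight univ y i * (Polynomial.X ^ (M + (a : ℕ)) * q b).eval (y i) with hH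
  set R : Matrix (Fin N) (Fin M) ℂ := Matrix.of fun a k =>
    ∑ i, K i k * Lagrange.nodalWeight univ y i * y i ^ (M + (a : ℕ)) with hR
  have hdeg : ∀ (m : ℕ) (b : Fin N), (Polynomial.X ^ m * q b).natDegree ≤ m + b := by
    intro m b
    refine Polynomial.natDegree_mul_le.trans ?_
    have := hq b
    rw [Polynomial.natDegree_X_pow]; omega
  have hblock : V.transpose * D * G = Matrix.fromBlocks P 0 R H := by
    ext i j
    rw [Matrix.mul_apply]
    have h0 : ∀ l, (V.transpose * D) i l * G l j
      = (fun l' => y l' ^ (e i : ℕ) * Lagrange.nodalWeight univ y l' *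
        Sum.elim (fun k => K l' k) (fun b => (q b).eval (y l')) j) (e l) := by
      intro l
      simp [hV, hD, hG, Matrix.mul_diagonal, Matrix.vandermonde_apply]
    simp_rw [h0]
    rw [Equiv.sum_comp e (fun l' => y l' ^ (e i : ℕ) * Lagrange.nodalWeight univ y l' *
        Sum.elim (fun k => K l' k) (fun b => (q b).eval (y l')) j)]
    rcases i with i | i <;> rcases j with j | j
    · simp only [he, Sum.elim_inl, Matrix.fromBlocks_apply₁₁, hP, Matrix.of_apply,
        finSumFinEquiv_apply_left, Fin.val_castAdd]
      exact Finset.sum_congr rfl fun l _ => by ring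
    · simp only [he, Sum.elim_inr, Matrix.fromBlocks_apply₁₂, Matrix.zero_apply,
        finSumFinEquiv_apply_left, Fin.val_castAdd]
      have hd := hdeg i j
      have h1 := lag_sum y hy (Polynomial.X ^ (i : ℕ) * q j) (by omega)
      rw [Polynomial.coeff_eq_zero_of_natDegree_lt (by omega)] at h1
      rw [← h1]
      refine Finset.sum_congr rfl fun l _ => ?_
      simp; ring
    · simp only [he, Sum.elim_inl, Matrix.fromBlocks_apply₂₁, hR, Matrix.of_apply,
        finSumFinEquiv_apply_right, Fin.val_natAdd]
      exact Finset.sum_congr rfl fun l _ => by ring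
    · simp only [he, Sum.elim_inr, Matrix.fromBlocks_apply₂₂, hH, Matrix.of_apply,
        finSumFinEquiv_apply_right, Fin.val_natAdd]
      refine Finset.sum_congr rfl fun l _ => ?_
      simp; ring
  have hHdet : H.det = epsSign N * ∏ b, (q b).coeff b := by
    rw [det_anti N H]
    · congr 1
      refine Finset.prod_congr rfl fun b _ => ?_
      simp only [hH, Matrix.of_apply]
      have hd := hdeg (M + (b.rev : ℕ)) b
      have hb := b.2
      have hr : (b.rev : ℕ) = N - (b + 1) := Fin.val_rev b
      rw [lag_sum y hy _ (by omega)]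
      have : M + N - 1 = (b : ℕ) + (M + (b.rev : ℕ)) := by omega
      rw [this, Polynomial.coeff_X_pow_mul]
    · intro a b hab
      simp only [hH, Matrix.of_apply]
      have hd := hdeg (M + (a : ℕ)) b
      rw [lag_sum y hy _ (by omega)]
      exact Polynomial.coeff_eq_zero_of_natDegree_lt (by omega)
  have := congrArg Matrix.det hblock
  rw [Matrix.det_fromBlocks_zero₁₂, Matrix.det_mul, Matrix.det_mul, Matrix.det_transpose,
    hV, Matrix.det_submatrix_equiv_self, hD, Matrix.det_diagonal,
    Equiv.prod_comp e (fun i => Lagrange.nodalWeight univ y i), hHdet] at this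
  exact this

theorem stmt12 (L M : ℕ) (hML : M ≤ L) (η ξp ξm : ℂ)
    (x : Fin L → ℂ) (z : Fin M → ℂ)
    (hx0 : ∀ i, x i ≠ 0) (hz0 : ∀ k, z k ≠ 0)
    (hx : ∀ i j, i ≠ j → x i ^ 2 ≠ x j ^ 2)
    (hz : ∀ i j, i ≠ j → z i ^ 2 ≠ z j ^ 2)
    (hxz : ∀ i k, (x i + η / 2) ^ 2 ≠ z k ^ 2 ∧ (x i - η / 2) ^ 2 ≠ z k ^ 2)
    (hzx : ∀ k i, (z k + η / 2) ^ 2 ≠ x i ^ 2 ∧ (z k - η / 2) ^ 2 ≠ x i ^ 2) :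
    Afun η x (fFun η ξp ξm z)
      = (-1 : ℂ) ^ M * 2 ^ (L - M) * (∏ j ∈ Finset.range (L - M), (ξp + ξm + (j : ℂ) * η))
          * Afun η z (fFun η (-ξp + η / 2) (-ξm + η / 2) x) := by
  obtain ⟨N, rfl⟩ := Nat.exists_eq_add_of_le hML
  rw [Nat.add_sub_cancel_left]
  have hy : Function.Injective fun i => x i ^ 2 := by
    intro i j h; by_contra hne; exact hx i j hne h
  have hc : Function.Injective fun i => z i ^ 2 := by
    intro i j h; by_contra hne; exact hz i j hne h
  choose q hq1 hq2 hq3 using exists_q η ξp ξm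
  -- the main determinants
  have hVx : (Matrix.of fun i j : Fin (M + N) => x i ^ (2 * (j : ℕ)))
      = Matrix.vandermonde fun i => x i ^ 2 := by
    ext i j; simp [Matrix.vandermonde_apply, pow_mul]
  have hVz : (Matrix.of fun i j : Fin M => z i ^ (2 * (j : ℕ)))
      = Matrix.vandermonde fun i => z i ^ 2 := by
    ext i j; simp [Matrix.vandermonde_apply, pow_mul]
  rw [Afun, Afun, hVx, hVz]
  have hVL : (Matrix.vandermonde fun i => x i ^ 2).det ≠ 0 :=
    Matrix.det_vandermonde_ne_zero_iff.2 hy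
  have hVM : (Matrix.vandermonde fun i => z i ^ 2).det ≠ 0 :=
    Matrix.det_vandermonde_ne_zero_iff.2 hc
  have h3 := vdm_sq _ hy
  have h4a := det_coeff (N := N) _ hc
  have h4b := vdm_sq _ hc
  have h2 := det_G _ hy (fun i k => Kker η ξp ξm (x i) (z k)) (fun b => q b) (fun b => hq1 b)
  -- z side
  have h5 : (Matrix.of fun i j : Fin M =>
      fFun η (-ξp + η / 2) (-ξm + η / 2) x (z i) * (z i + η / 2) ^ (2 * (j : ℕ))
        + fFun η (-ξp + η / 2) (-ξm + η / 2) x (-z i) * (z i - η / 2) ^ (2 * (j : ℕ))).det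
      = (∏ k, (Lagrange.nodal univ fun i => x i ^ 2).eval (z k ^ 2)) *
        (Matrix.of fun j k : Fin M => ∑ i, Kker η ξp ξm (x i) (z k) *
          Lagrange.nodalWeight univ (fun i => x i ^ 2) i * (x i ^ 2) ^ (j : ℕ)).det := by
    rw [← Matrix.det_transpose (Matrix.of fun j k : Fin M => ∑ i, Kker η ξp ξm (x i) (z k) *
          Lagrange.nodalWeight univ (fun i => x i ^ 2) i * (x i ^ 2) ^ (j : ℕ)),
      ← Matrix.det_mul_column]
    congr 1
    ext k j
    simp only [Matrix.of_apply, Matrix.transpose_apply]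
    rw [zside η _ _ x hy (z k) (fun i => (hzx k i).1) (fun i => (hzx k i).2) j
      (by have := j.2; omega)]
    congr 1
    refine Finset.sum_congr rfl fun i _ => ?_
    rw [Kker_symm η ξp ξm (x i) (z k) (hx0 i) (hz0 k) (hxz i k).1 (hxz i k).2
      (hzx k i).1 (hzx k i).2]
  -- x side
  have h1 : (Matrix.of fun i j : Fin (M + N) =>
      fFun η ξp ξm z (x i) * (x i + η / 2) ^ (2 * (j : ℕ))
        + fFun η ξp ξm z (-x i) * (x i - η / 2) ^ (2 * (j : ℕ))).det *
      (Matrix.of fun i j : Fin M ⊕ Fin N =>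
        (Bpoly (fun k => z k ^ 2) j).coeff (finSumFinEquiv i : Fin (M + N))).det
      = (∏ i, (Lagrange.nodal univ fun k => z k ^ 2).eval (x i ^ 2)) *
      (Matrix.of fun i j : Fin M ⊕ Fin N =>
        (Sum.elim (fun k => Kker η ξp ξm (x (finSumFinEquiv i)) (z k))
          (fun b : Fin N => (q b).eval (x (finSumFinEquiv i) ^ 2)) j : ℂ)).det := by
    rw [← Equiv.prod_comp finSumFinEquiv
      (fun i => (Lagrange.nodal univ fun k => z k ^ 2).eval (x i ^ 2)), ← Matrix.det_mul_column,
      ← Matrix.det_submatrix_equiv_self finSumFinEquiv, ← Matrix.det_mul]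
    congr 1
    ext i j
    rw [Matrix.mul_apply]
    simp only [Matrix.of_apply, Matrix.submatrix_apply]
    set i' : Fin (M + N) := finSumFinEquiv i
    rw [Equiv.sum_comp finSumFinEquiv (fun l : Fin (M + N) =>
      (fFun η ξp ξm z (x i') * (x i' + η / 2) ^ (2 * (l : ℕ))
        + fFun η ξp ξm z (-x i') * (x i' - η / 2) ^ (2 * (l : ℕ)))
        * (Bpoly (fun k => z k ^ 2) j).coeff l)]
    have hT : ∑ l : Fin (M + N),
      (fFun η ξp ξm z (x i') * (x i' + η / 2) ^ (2 * (l : ℕ))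
        + fFun η ξp ξm z (-x i') * (x i' - η / 2) ^ (2 * (l : ℕ)))
        * (Bpoly (fun k => z k ^ 2) j).coeff l
        = fFun η ξp ξm z (x i') * (Bpoly (N := N) (fun k => z k ^ 2) j).eval ((x i' + η / 2) ^ 2)
        + fFun η ξp ξm z (-x i') * (Bpoly (N := N) (fun k => z k ^ 2) j).eval ((x i' - η / 2) ^ 2) := by
      rw [Polynomial.eval_eq_sum_range' (Bpoly_natDegree (fun k => z k ^ 2) j),
        Polynomial.eval_eq_sum_range' (Bpoly_natDegree (fun k => z k ^ 2) j),
        ← Fin.sum_univ_eq_sum_range (fun l => (Bpoly (N := N) (fun k => z k ^ 2) j).coeff l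
          * ((x i' + η / 2) ^ 2) ^ l),
        ← Fin.sum_univ_eq_sum_range (fun l => (Bpoly (N := N) (fun k => z k ^ 2) j).coeff l
          * ((x i' - η / 2) ^ 2) ^ l), Finset.mul_sum, Finset.mul_sum, ← Finset.sum_add_distrib]
      refine Finset.sum_congr rfl fun l _ => ?_
      rw [pow_mul, pow_mul]; ring
    rw [hT]
    rcases j with k | b
    · exact xside1 η ξp ξm z (x i') (fun k => (hxz i' k).1) (fun k => (hxz i' k).2) k
    · exact xside2 η ξp ξm z (x i') (hx0 i') (fun k => (hxz i' k).1) (fun k => (hxz i' k).2) b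
        (q b) (hq3 b)
  have h6 : (∏ i, (Lagrange.nodal univ fun k => z k ^ 2).eval (x i ^ 2))
      = (-1) ^ (M * (M + N)) * ∏ k, (Lagrange.nodal univ fun i => x i ^ 2).eval (z k ^ 2) := by
    simp_rw [Lagrange.eval_nodal]
    rw [Finset.prod_comm]
    have : ∀ k, ∏ i, (x i ^ 2 - z k ^ 2) = (-1) ^ (M + N) * ∏ i, (z k ^ 2 - x i ^ 2) := by
      intro k
      have e : ∀ i, x i ^ 2 - z k ^ 2 = (-1) * (z k ^ 2 - x i ^ 2) := fun i => by ring
      simp_rw [e]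
      rw [Finset.prod_mul_distrib, Finset.prod_const, card_univ, Fintype.card_fin]
    simp_rw [this]
    rw [Finset.prod_mul_distrib, Finset.prod_const, card_univ, Fintype.card_fin, ← pow_mul,
      mul_comm M]
  have h7 : (∏ b : Fin N, (q b).coeff b)
      = 2 ^ N * ∏ j ∈ Finset.range N, (ξp + ξm + (j : ℂ) * η) := by
    simp_rw [hq2]
    rw [Fin.prod_univ_eq_prod_range (fun j : ℕ => 2 * (ξp + ξm + (j : ℂ) * η)),
      Finset.prod_mul_distrib, Finset.prod_const, Finset.card_range]
  have h8 : epsSign M * epsSign (M + N) * epsSign N * (-1) ^ (M * (M + N)) = (-1) ^ M := by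
    rw [epsSign_add]
    have e1 := epsSign_sq M
    have e2 := epsSign_sq N
    have e3 : ((-1 : ℂ) ^ (M * N)) * (-1) ^ (M * N) = 1 := by rw [← mul_pow]; norm_num
    have e4 : ((-1 : ℂ)) ^ (M * M) = (-1) ^ M := by
      rcases Nat.even_or_odd M with h | h
      · rw [h.neg_one_pow, (h.mul_left M).neg_one_pow]
      · rw [h.neg_one_pow, (h.mul h).neg_one_pow]
    rw [mul_add, pow_add, e4]
    linear_combination (-1 : ℂ) ^ M * (epsSign N * epsSign N * ((-1 : ℂ) ^ (M * N)) * (-1) ^ (M * N) * e1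
      + ((-1 : ℂ) ^ (M * N)) * (-1) ^ (M * N) * e2 + e3)
  have h9 := epsSign_sq (M + N)
  rw [h7] at h2
  rw [h5]
  rw [h6] at h1
  generalize hdA : (Matrix.of fun i j : Fin (M + N) =>
      fFun η ξp ξm z (x i) * (x i + η / 2) ^ (2 * (j : ℕ))
        + fFun η ξp ξm z (-x i) * (x i - η / 2) ^ (2 * (j : ℕ))).det = dA at *
  generalize (Matrix.of fun i j : Fin M ⊕ Fin N =>
        (Bpoly (fun k => z k ^ 2) j).coeff (finSumFinEquiv i : Fin (M + N))).det = dC at *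
  generalize (Matrix.of fun i j : Fin M ⊕ Fin N =>
        (Sum.elim (fun k => Kker η ξp ξm (x (finSumFinEquiv i)) (z k))
          (fun b : Fin N => (q b).eval (x (finSumFinEquiv i) ^ 2)) j : ℂ)).det = G at *
  generalize (Matrix.of fun j k : Fin M => ∑ i, Kker η ξp ξm (x i) (z k) *
          Lagrange.nodalWeight univ (fun i => x i ^ 2) i * (x i ^ 2) ^ (j : ℕ)).det = dP at *
  generalize (Matrix.vandermonde fun i => x i ^ 2).det = VL at *
  generalize (Matrix.vandermonde fun i => z i ^ 2).det = VM at *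
  generalize (∏ i, Lagrange.nodalWeight univ (fun i => x i ^ 2) i) = wX at *
  generalize (∏ i, Lagrange.nodalWeight univ (fun i => z i ^ 2) i) = wZ at *
  generalize (∏ k, (Lagrange.nodal univ fun i => x i ^ 2).eval (z k ^ 2)) = PX at *
  generalize (∏ j ∈ Finset.range N, (ξp + ξm + (j : ℂ) * η)) = S at *
  clear hdA h5 h6 h7
  generalize epsSign (M + N) = εL at *
  generalize epsSign M = εM at *
  generalize epsSign N = εN at *
  have a1 : dC * εM = VM := by
    rw [← h4b]; linear_combination VM * h4a
  have a2 : εL * G = VL * dP * εN * (2 ^ N * S) := by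
    rw [← h3]; linear_combination VL * h2
  have a3 : dA * VM = (-1) ^ M * 2 ^ N * S * (PX * dP) * VL := by
    rw [← h8, ← a1]
    linear_combination εM * h1 - (-1) ^ (M * (M + N)) * PX * G * εM * h9
      + εM * εL * (-1) ^ (M * (M + N)) * PX * a2
  rw [← mul_div_assoc, div_eq_div_iff hVL hVM]
  exact a3
end

section
/- Let L ≥ M ≥ 0 be integers, η ∈ ℂ∖{0}, and let x_1,…,x_M, y_1,…,y_L ∈ ℂ be such that: the M+L squares x_1²,…,x_M²,y_1²,…,y_L² are pairwise distinct; (x_k+η/2)², k = 1,…,M, together with (x_k−η/2)², k = 1,…,M, are 2M pairwise distinct numbers; (y_i+εη/2)² ≠ (x_k+ε'η/2)² for all i,k and all signs ε, ε' ∈ {±1}; 2x_k + η ≠ 0 and (x_k−η)² ≠ x_m² for all k,m. Then for every function f : ℂ → ℂ one has A_{{x}∪{y}}[f] = S_{{x},{y}}[f]. -/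
open Finset

/-- `V̂(u_1,…,u_K) = ∏_{j<k}(u_k² − u_j²)`. -/
noncomputable def Vhat {K : ℕ} (u : Fin K → ℂ) : ℂ :=
  ∏ j, ∏ k ∈ Finset.Ioi j, (u k ^ 2 - u j ^ 2)

/-- `X(λ) = ∏_m (λ² − x_m²)`. -/
noncomputable def Xfun {M : ℕ} (x : Fin M → ℂ) (lam : ℂ) : ℂ :=
  ∏ m, (lam ^ 2 - x m ^ 2)

/-- `φ_{{x}}(λ) = ((2λ−η)/(2λ+η)) · X(λ+η)/X(λ−η)`. -/
noncomputable def phiFun (η : ℂ) {M : ℕ} (x : Fin M → ℂ) (lam : ℂ) : ℂ :=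
  ((2 * lam - η) / (2 * lam + η)) * (Xfun x (lam + η) / Xfun x (lam - η))

/-- The `L×L` Slavnov-type matrix `S_{x,y}[f]`. -/
noncomputable def Smat (η : ℂ) {M L : ℕ} (x : Fin M → ℂ) (y : Fin L → ℂ)
    (f : ℂ → ℂ) : Matrix (Fin L) (Fin L) ℂ :=
  Matrix.of fun i k : Fin L =>
    if hk : (k : ℕ) < M then
      f (y i) * Xfun x (y i + η)
          * (f (-x ⟨k, hk⟩) / ((y i + η / 2) ^ 2 - (x ⟨k, hk⟩ + η / 2) ^ 2)
             - f (x ⟨k, hk⟩) * phiFun η x (x ⟨k, hk⟩)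
                 / ((y i + η / 2) ^ 2 - (x ⟨k, hk⟩ - η / 2) ^ 2))
        + f (-y i) * Xfun x (y i - η)
          * (f (-x ⟨k, hk⟩) / ((y i - η / 2) ^ 2 - (x ⟨k, hk⟩ + η / 2) ^ 2)
             - f (x ⟨k, hk⟩) * phiFun η x (x ⟨k, hk⟩)
                 / ((y i - η / 2) ^ 2 - (x ⟨k, hk⟩ - η / 2) ^ 2))
    else
      f (y i) * Xfun x (y i + η) * (y i + η / 2) ^ (2 * ((k : ℕ) - M))
        + f (-y i) * Xfun x (y i - η) * (y i - η / 2) ^ (2 * ((k : ℕ) - M))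

/-- The scalar `S_{{x},{y}}[f]`. -/
noncomputable def Sval (η : ℂ) {M L : ℕ} (x : Fin M → ℂ) (y : Fin L → ℂ)
    (f : ℂ → ℂ) : ℂ :=
  (Vhat (fun k => x k - η / 2) / Vhat (fun k => x k + η / 2))
    * Matrix.det (Smat η x y f)
    / (Vhat (fun k => x (Fin.rev k)) * Vhat y)

namespace Stmt15Aux

open Polynomial in
/-- elimination of the first block of columns, regular case -/
lemma elim_reg {R : Type*} [CommRing R] [IsDomain R] {M N : ℕ} (d e : Fin M → R)
    (hd : ∀ k, d k ≠ 0)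
    (Ya : Matrix (Fin (M + N)) (Fin M) R) (Yr : Matrix (Fin (M + N)) (Fin (M + N)) R) :
    (Matrix.fromBlocks (Matrix.diagonal d)
      (Matrix.of fun k j => Fin.append (Pi.single k (e k)) (fun _ : Fin N => (0 : R)) j)
      Ya Yr).det * (-1) ^ M
    = (Matrix.of fun i j => Fin.append (fun k => Ya i k * e k - Yr i (Fin.castAdd N k) * d k)
        (fun k => Yr i (Fin.natAdd M k)) j).det := by
  set B : Matrix (Fin M) (Fin (M + N)) R :=
    Matrix.of fun k j => Fin.append (Pi.single k (e k)) (fun _ : Fin N => (0 : R)) j with hB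
  set G : Matrix (Fin (M + N)) (Fin (M + N)) R :=
    Matrix.diagonal (Fin.append (fun k => - d k) (fun _ : Fin N => (1 : R))) with hG
  have hmul : Matrix.fromBlocks (Matrix.diagonal d) B Ya Yr * Matrix.fromBlocks 1 B 0 G
      = Matrix.fromBlocks (Matrix.diagonal d) 0 Ya (Ya * B + Yr * G) := by
    rw [Matrix.fromBlocks_multiply]
    congr 1
    · simp
    · ext k j
      rw [hG, Matrix.add_apply, Matrix.diagonal_mul, Matrix.mul_diagonal]
      refine Fin.addCases (fun m => ?_) (fun m => ?_) j
      · simp only [hB, Matrix.of_apply, Fin.append_left, Matrix.zero_apply]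
        by_cases h : m = k
        · subst h; simp; ring
        · simp [Pi.single_eq_of_ne h]
      · simp [hB]
    · simp
  have hdet := congrArg Matrix.det hmul
  rw [Matrix.det_mul, Matrix.det_fromBlocks_zero₂₁, Matrix.det_fromBlocks_zero₁₂, Matrix.det_one,
    one_mul, hG, Matrix.det_diagonal, Matrix.det_diagonal, Fin.prod_univ_add] at hdet
  simp only [Fin.append_left, Fin.append_right, Finset.prod_const_one, mul_one,
    Finset.prod_neg, Finset.card_univ, Fintype.card_fin] at hdet
  have hS : Ya * B + Yr * G = (Matrix.of fun i j =>
      Fin.append (fun k => Ya i k * e k - Yr i (Fin.castAdd N k) * d k)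
        (fun k => Yr i (Fin.natAdd M k)) j) := by
    ext i j
    rw [hG, Matrix.add_apply, Matrix.mul_diagonal, Matrix.mul_apply]
    refine Fin.addCases (fun m => ?_) (fun m => ?_) j
    · simp only [hB, Matrix.of_apply, Fin.append_left, Pi.single_apply]
      simp [sub_eq_add_neg]
    · simp [hB]
  rw [← hG, hS] at hdet
  have hP : ∏ k, d k ≠ 0 := Finset.prod_ne_zero_iff.mpr fun k _ => hd k
  apply mul_left_cancel₀ hP
  rw [← hdet]; ring

open Polynomial in
lemma elim_gen {M N : ℕ} (d e : Fin M → ℂ)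
    (Ya : Matrix (Fin (M + N)) (Fin M) ℂ) (Yr : Matrix (Fin (M + N)) (Fin (M + N)) ℂ) :
    (Matrix.fromBlocks (Matrix.diagonal d)
      (Matrix.of fun k j => Fin.append (Pi.single k (e k)) (fun _ : Fin N => (0 : ℂ)) j)
      Ya Yr).det * (-1) ^ M
    = (Matrix.of fun i j => Fin.append (fun k => Ya i k * e k - Yr i (Fin.castAdd N k) * d k)
        (fun k => Yr i (Fin.natAdd M k)) j).det := by
  have h := elim_reg (R := ℂ[X]) (N := N) (fun k => X + C (d k)) (fun k => C (e k))
    (fun k => X_add_C_ne_zero _) (Ya.map C) (Yr.map C)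
  have h2 := congrArg (evalRingHom (0 : ℂ)) h
  rw [map_mul, RingHom.map_det, RingHom.map_det] at h2
  convert h2 using 3
  · ext i j
    rcases i with i | i <;> rcases j with j | j
    · by_cases hij : i = j
      · subst hij; simp
      · simp [hij]
    · refine Fin.addCases (fun m => ?_) (fun m => ?_) j
      · by_cases hij : m = i
        · subst hij; simp
        · simp [Pi.single_eq_of_ne hij]
      · simp
    · simp
    · simp
  · simp
  · ext i j
    refine Fin.addCases (fun m => ?_) (fun m => ?_) j <;> simp

noncomputable def V {K : ℕ} (u : Fin K → ℂ) : ℂ := (Matrix.vandermonde u).det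

lemma Vhat_eq {K : ℕ} (u : Fin K → ℂ) : Vhat u = V (fun i => u i ^ 2) := by
  rw [V, Matrix.det_vandermonde, Vhat]

lemma V_eq_ite {K : ℕ} (u : Fin K → ℂ) :
    V u = ∏ j, ∏ k, if j < k then u k - u j else 1 := by
  rw [V, Matrix.det_vandermonde]
  refine Finset.prod_congr rfl fun j _ => ?_
  rw [← Finset.prod_filter]
  refine Finset.prod_congr ?_ fun _ _ => rfl
  ext; simp

lemma V_append {K N : ℕ} (u : Fin K → ℂ) (v : Fin N → ℂ) :
    V (Fin.append u v) = V u * V v * ∏ i, ∏ j, (v j - u i) := by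
  have h1 : ∀ (i : Fin K) (j : Fin N), Fin.castAdd N i < Fin.natAdd K j := by
    intro i j; simp [Fin.lt_def]; omega
  have h2 : ∀ (i : Fin K) (j : Fin N), ¬ Fin.natAdd K j < Fin.castAdd N i := by
    intro i j; simp [Fin.lt_def]; omega
  have h3 : ∀ (i j : Fin K), (Fin.castAdd N i < Fin.castAdd N j) ↔ i < j := by
    intro i j; rw [Fin.lt_def, Fin.lt_def]; simp
  have h4 : ∀ (i j : Fin N), (Fin.natAdd K i < Fin.natAdd K j) ↔ i < j := by
    intro i j; rw [Fin.lt_def, Fin.lt_def]; simp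
  simp only [V_eq_ite, Fin.prod_univ_add, Fin.append_left, Fin.append_right, h1, h2, h3, h4,
    if_true, if_false, Finset.prod_const_one, Finset.prod_mul_distrib]
  ring

lemma V_ne_zero {K : ℕ} (u : Fin K → ℂ) (hu : Function.Injective u) : V u ≠ 0 :=
  Matrix.det_vandermonde_ne_zero_iff.mpr hu

noncomputable def sg (M : ℕ) : ℂ := ((Equiv.Perm.sign (Fin.revPerm : Equiv.Perm (Fin M)) : ℤ) : ℂ)

lemma sg_sq (M : ℕ) : sg M * sg M = 1 := by
  unfold sg
  rw [← Int.cast_mul, ← Units.val_mul, Int.units_mul_self]; simp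

lemma V_rev {M : ℕ} (u : Fin M → ℂ) : V (fun k => u (Fin.rev k)) = sg M * V u := by
  have := Matrix.det_permute (Fin.revPerm : Equiv.Perm (Fin M)) (Matrix.vandermonde u)
  unfold V sg
  rw [← this]; rfl

lemma prod_offdiag {M : ℕ} (u : Fin M → ℂ) :
    ∏ k, ∏ m ∈ Finset.univ.erase k, (u k - u m) = sg M * V u ^ 2 := by
  have h1 : V u = ∏ k, ∏ m, if m < k then u k - u m else 1 := by
    rw [V_eq_ite, Finset.prod_comm]
  have h2 : sg M * V u = ∏ k, ∏ m, if k < m then u k - u m else 1 := by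
    rw [← V_rev, V_eq_ite, Finset.prod_comm, ← Equiv.prod_comp Fin.revPerm]
    refine Finset.prod_congr rfl fun k _ => ?_
    rw [← Equiv.prod_comp Fin.revPerm]
    refine Finset.prod_congr rfl fun m _ => ?_
    simp [Fin.rev_lt_rev]
  rw [sq, ← mul_assoc, h2]
  nth_rewrite 1 [h1]
  rw [← Finset.prod_mul_distrib]
  refine Finset.prod_congr rfl fun k _ => ?_
  rw [← Finset.prod_mul_distrib, ← Finset.mul_prod_erase Finset.univ _ (Finset.mem_univ k)]
  simp only [lt_irrefl, if_false, one_mul]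
  refine Finset.prod_congr rfl fun m hm => ?_
  rcases lt_trichotomy k m with h | h | h
  · simp [h, h.not_gt]
  · simp [h] at hm
  · simp [h, h.not_gt]

section basis
open Polynomial

noncomputable def pa {M : ℕ} (a b : Fin M → ℂ) (k : Fin M) : ℂ[X] :=
  (∏ m ∈ Finset.univ.erase k, (X - C (a m))) * ∏ m, (X - C (b m))

noncomputable def pt {M : ℕ} (a b : Fin M → ℂ) (j : ℕ) : ℂ[X] :=
  ((∏ m, (X - C (a m))) * ∏ m, (X - C (b m))) * X ^ j

noncomputable def P {M : ℕ} (N : ℕ) (a b : Fin M → ℂ) : Fin (M + (M + N)) → ℂ[X] :=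
  Fin.append (pa a b) (Fin.append (pa b a) (fun j : Fin N => pt a b j))

lemma pa_deg {M : ℕ} (a b : Fin M → ℂ) (k : Fin M) : (pa a b k).natDegree < 2 * M := by
  unfold pa
  rw [natDegree_mul (Finset.prod_ne_zero_iff.mpr fun m _ => X_sub_C_ne_zero _)
    (Finset.prod_ne_zero_iff.mpr fun m _ => X_sub_C_ne_zero _),
    natDegree_prod _ _ (fun m _ => X_sub_C_ne_zero _),
    natDegree_prod _ _ (fun m _ => X_sub_C_ne_zero _)]
  have := k.pos
  simp
  omega

lemma pt_deg {M : ℕ} (a b : Fin M → ℂ) (j : ℕ) : (pt a b j).natDegree = 2 * M + j := by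
  unfold pt
  rw [natDegree_mul (mul_ne_zero (Finset.prod_ne_zero_iff.mpr fun m _ => X_sub_C_ne_zero _)
    (Finset.prod_ne_zero_iff.mpr fun m _ => X_sub_C_ne_zero _)) (pow_ne_zero _ X_ne_zero),
    natDegree_mul (Finset.prod_ne_zero_iff.mpr fun m _ => X_sub_C_ne_zero _)
    (Finset.prod_ne_zero_iff.mpr fun m _ => X_sub_C_ne_zero _),
    natDegree_prod _ _ (fun m _ => X_sub_C_ne_zero _),
    natDegree_prod _ _ (fun m _ => X_sub_C_ne_zero _)]
  simp
  omega

lemma P_deg {M N : ℕ} (a b : Fin M → ℂ) (k : Fin (M + (M + N))) :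
    (P N a b k).natDegree < M + (M + N) := by
  unfold P
  refine Fin.addCases (fun m => ?_) (fun m => ?_) k
  · rw [Fin.append_left]; have := pa_deg a b m; omega
  · rw [Fin.append_right]
    refine Fin.addCases (fun m => ?_) (fun m => ?_) m
    · rw [Fin.append_left]; have := pa_deg b a m; omega
    · rw [Fin.append_right, pt_deg]; have := m.2; omega

noncomputable def Cm {M : ℕ} (N : ℕ) (a b : Fin M → ℂ) :
    Matrix (Fin (M + (M + N))) (Fin (M + (M + N))) ℂ :=
  Matrix.of fun j k => (P N a b k).coeff j

lemma eval_P {M N : ℕ} (a b : Fin M → ℂ) (k : Fin (M + (M + N))) (t : ℂ) :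
    ∑ j : Fin (M + (M + N)), t ^ (j : ℕ) * Cm N a b j k = (P N a b k).eval t := by
  rw [eval_eq_sum_range' (P_deg a b k), ← Fin.sum_univ_eq_sum_range
    (fun j => (P N a b k).coeff j * t ^ j)]
  refine Finset.sum_congr rfl fun j _ => ?_
  simp [Cm, mul_comm]

lemma pa_eval {M : ℕ} (a b : Fin M → ℂ) (k : Fin M) (t : ℂ) :
    (pa a b k).eval t = (∏ m ∈ Finset.univ.erase k, (t - a m)) * ∏ m, (t - b m) := by
  simp [pa, eval_prod]

lemma pt_eval {M : ℕ} (a b : Fin M → ℂ) (j : ℕ) (t : ℂ) :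
    (pt a b j).eval t = (∏ m, (t - a m)) * (∏ m, (t - b m)) * t ^ j := by
  simp [pt, eval_prod]

lemma pa_eval_mul {M : ℕ} (a b : Fin M → ℂ) (k : Fin M) (t : ℂ) :
    (t - a k) * (pa a b k).eval t = (∏ m, (t - a m)) * ∏ m, (t - b m) := by
  rw [pa_eval, ← mul_assoc, Finset.mul_prod_erase Finset.univ (fun m => t - a m)
    (Finset.mem_univ k)]

lemma pa_eval_a {M : ℕ} (a b : Fin M → ℂ) (k m : Fin M) (h : m ≠ k) :
    (pa a b k).eval (a m) = 0 := by
  rw [pa_eval, Finset.prod_eq_zero (i := m) (by simp [h]) (by simp), zero_mul]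

lemma pa_eval_b {M : ℕ} (a b : Fin M → ℂ) (k m : Fin M) :
    (pa a b k).eval (b m) = 0 := by
  rw [pa_eval, Finset.prod_eq_zero (s := Finset.univ) (i := m) (by simp) (by simp), mul_zero]

lemma pt_eval_a {M : ℕ} (a b : Fin M → ℂ) (k : ℕ) (m : Fin M) :
    (pt a b k).eval (a m) = 0 := by
  rw [pt_eval, Finset.prod_eq_zero (s := Finset.univ) (i := m) (by simp) (by simp)]; simp

lemma pt_eval_b {M : ℕ} (a b : Fin M → ℂ) (k : ℕ) (m : Fin M) :
    (pt a b k).eval (b m) = 0 := by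
  rw [pt_eval, Finset.prod_eq_zero (s := Finset.univ) (f := fun i => b m - b i)
    (i := m) (by simp) (by simp)]; simp

lemma det_Cm_aux {M N : ℕ} (a b : Fin M → ℂ) (z : Fin N → ℂ) :
    V (Fin.append a (Fin.append b z)) * (Cm N a b).det
      = (∏ k, (pa a b k).eval (a k)) * ((∏ k, (pa b a k).eval (b k)) *
        ((∏ i, ((∏ m, (z i - a m)) * (∏ m, (z i - b m)))) * V z)) := by
  rw [V, ← Matrix.det_mul]
  have hE : Matrix.vandermonde (Fin.append a (Fin.append b z)) * Cm N a b
      = Matrix.of fun i k => (P N a b k).eval (Fin.append a (Fin.append b z) i) := by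
    ext i k
    rw [Matrix.mul_apply, Matrix.of_apply, ← eval_P]
    rfl
  rw [hE, ← Matrix.det_submatrix_equiv_self finSumFinEquiv]
  have hB : (Matrix.of fun i k => (P N a b k).eval
        (Fin.append a (Fin.append b z) i)).submatrix finSumFinEquiv finSumFinEquiv
      = Matrix.fromBlocks (Matrix.diagonal fun k => (pa a b k).eval (a k)) 0
        (Matrix.of fun i k => (pa a b k).eval (Fin.append b z i))
        (Matrix.of fun i k => (Fin.append (pa b a) (fun j : Fin N => pt a b j) k).eval
          (Fin.append b z i)) := by
    ext i j
    rcases i with i | i <;> rcases j with j | j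
    · by_cases hij : i = j
      · subst hij; simp [P]
      · simp [P, hij, pa_eval_a]
    · refine Fin.addCases (fun m => ?_) (fun m => ?_) j
      · simp [P, pa_eval_b]
      · simp [P, pt_eval_a]
    · simp [P]
    · simp [P]
  rw [hB, Matrix.det_fromBlocks_zero₁₂, Matrix.det_diagonal]
  congr 1
  rw [← Matrix.det_submatrix_equiv_self finSumFinEquiv]
  have hB2 : (Matrix.of fun i k => (Fin.append (pa b a) (fun j : Fin N => pt a b j) k).eval
          (Fin.append b z i)).submatrix finSumFinEquiv finSumFinEquiv
      = Matrix.fromBlocks (Matrix.diagonal fun k => (pa b a k).eval (b k)) 0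
        (Matrix.of fun i k => (pa b a k).eval (z i))
        (Matrix.diagonal (fun i => ((∏ m, (z i - a m)) * (∏ m, (z i - b m))))
          * Matrix.vandermonde z) := by
    ext i j
    rcases i with i | i <;> rcases j with j | j
    · by_cases hij : i = j
      · subst hij; simp
      · simp [hij, pa_eval_a]
    · simp [pt_eval_b]
    · simp
    · simp [pt_eval, Matrix.vandermonde_apply]
  rw [hB2, Matrix.det_fromBlocks_zero₁₂, Matrix.det_diagonal, Matrix.det_mul, Matrix.det_diagonal,
    V]

lemma det_Cm {M N : ℕ} (a b : Fin M → ℂ) :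
    V a * V b * (∏ i, ∏ j, (b j - a i)) * (Cm N a b).det
      = (∏ k, (pa a b k).eval (a k)) * (∏ k, (pa b a k).eval (b k)) := by
  obtain ⟨z, hz, hza, hzb⟩ : ∃ z : Fin N → ℂ, Function.Injective z ∧
      (∀ i m, z i - a m ≠ 0) ∧ (∀ i m, z i - b m ≠ 0) := by
    have hfin : (Set.range a ∪ Set.range b).Finite :=
      (Set.finite_range a).union (Set.finite_range b)
    have hinf := hfin.infinite_compl
    let g := hinf.natEmbedding
    refine ⟨fun i => (g i : ℂ), ?_, ?_, ?_⟩
    · intro i j h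
      exact Fin.ext (g.injective (Subtype.ext h))
    · intro i m h
      exact (g i).2 (Or.inl ⟨m, (sub_eq_zero.mp h).symm⟩)
    · intro i m h
      exact (g i).2 (Or.inr ⟨m, (sub_eq_zero.mp h).symm⟩)
  have h := det_Cm_aux (N := N) a b z
  rw [V_append, V_append] at h
  have h1 : ∏ i, ∏ j, (Fin.append b z j - a i)
      = (∏ i, ∏ j, (b j - a i)) * ∏ i, ∏ m, (z i - a m) := by
    simp only [Fin.prod_univ_add, Fin.append_left, Fin.append_right, Finset.prod_mul_distrib]
    congr 1
    exact Finset.prod_comm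
  rw [h1, Finset.prod_mul_distrib, Finset.prod_comm (f := fun i j => z j - b i)] at h
  have n1 : ∏ i, ∏ m, (z i - a m) ≠ 0 :=
    Finset.prod_ne_zero_iff.mpr fun i _ => Finset.prod_ne_zero_iff.mpr fun m _ => hza i m
  have n2 : ∏ i, ∏ m, (z i - b m) ≠ 0 :=
    Finset.prod_ne_zero_iff.mpr fun i _ => Finset.prod_ne_zero_iff.mpr fun m _ => hzb i m
  have n3 := V_ne_zero z hz
  apply mul_right_cancel₀ (mul_ne_zero (mul_ne_zero n1 n2) n3)
  linear_combination h

/-- product of the derivative values -/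
lemma prod_pa {M : ℕ} (a b : Fin M → ℂ) :
    ∏ k, (pa a b k).eval (a k)
      = sg M * V a ^ 2 * ((-1) ^ M * ∏ i, ∏ j, (b j - a i)) := by
  simp only [pa_eval, Finset.prod_mul_distrib, prod_offdiag]
  congr 1
  have : ∀ i : Fin M, ∏ j, (a i - b j) = (-1) ^ M * ∏ j, (b j - a i) := by
    intro i
    have := Finset.prod_neg (s := Finset.univ) (f := fun j => b j - a i)
    simpa using this
  simp only [this, Finset.prod_mul_distrib]
  congr 1
  simp only [Finset.prod_const, Finset.card_univ, Fintype.card_fin]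
  rcases Nat.even_or_odd M with h | h
  · simp [h.neg_one_pow]
  · simp [h.neg_one_pow]

end basis

lemma X_mul {M : ℕ} (η : ℂ) (x : Fin M → ℂ) (lam : ℂ) :
    (∏ m, ((lam + η / 2) ^ 2 - (x m + η / 2) ^ 2)) * (∏ m, ((lam + η / 2) ^ 2 - (x m - η / 2) ^ 2))
      = Xfun x lam * Xfun x (lam + η) := by
  unfold Xfun
  rw [← Finset.prod_mul_distrib, ← Finset.prod_mul_distrib]
  refine Finset.prod_congr rfl fun m _ => ?_
  ring

lemma X_mul' {M : ℕ} (η : ℂ) (x : Fin M → ℂ) (lam : ℂ) :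
    (∏ m, ((lam - η / 2) ^ 2 - (x m + η / 2) ^ 2)) * (∏ m, ((lam - η / 2) ^ 2 - (x m - η / 2) ^ 2))
      = Xfun x lam * Xfun x (lam - η) := by
  unfold Xfun
  rw [← Finset.prod_mul_distrib, ← Finset.prod_mul_distrib]
  refine Finset.prod_congr rfl fun m _ => ?_
  ring

lemma qa_eq {M : ℕ} (η : ℂ) (x : Fin M → ℂ) (k : Fin M) (hη : η ≠ 0) :
    (2 * x k + η) * (pa (fun m => (x m + η / 2) ^ 2) (fun m => (x m - η / 2) ^ 2) k).eval
      ((x k + η / 2) ^ 2)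
    = 2 * x k * Xfun x (x k + η) * ∏ m ∈ Finset.univ.erase k, (x k ^ 2 - x m ^ 2) := by
  rw [pa_eval, Xfun, ← Finset.mul_prod_erase Finset.univ _ (Finset.mem_univ k),
    ← Finset.mul_prod_erase Finset.univ (fun m => (x k + η) ^ 2 - x m ^ 2) (Finset.mem_univ k)]
  have h : (∏ m ∈ Finset.univ.erase k, ((x k + η / 2) ^ 2 - (x m + η / 2) ^ 2)) *
      (∏ m ∈ Finset.univ.erase k, ((x k + η / 2) ^ 2 - (x m - η / 2) ^ 2))
      = (∏ m ∈ Finset.univ.erase k, ((x k + η) ^ 2 - x m ^ 2)) *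
        ∏ m ∈ Finset.univ.erase k, (x k ^ 2 - x m ^ 2) := by
    rw [← Finset.prod_mul_distrib, ← Finset.prod_mul_distrib]
    refine Finset.prod_congr rfl fun m _ => ?_
    ring
  linear_combination (2 * x k + η) * (2 * η * x k) * h

lemma qb_eq {M : ℕ} (η : ℂ) (x : Fin M → ℂ) (k : Fin M) (hη : η ≠ 0) :
    (2 * x k - η) * (pa (fun m => (x m - η / 2) ^ 2) (fun m => (x m + η / 2) ^ 2) k).eval
      ((x k - η / 2) ^ 2)
    = 2 * x k * Xfun x (x k - η) * ∏ m ∈ Finset.univ.erase k, (x k ^ 2 - x m ^ 2) := by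
  have h := qa_eq (-η) x k (neg_ne_zero.mpr hη)
  simpa only [neg_div, sub_neg_eq_add, ← sub_eq_add_neg] using h

lemma qa_phi {M : ℕ} (η : ℂ) (x : Fin M → ℂ) (k : Fin M) (hη : η ≠ 0)
    (h1 : 2 * x k + η ≠ 0) (h2 : ∀ m : Fin M, (x k - η) ^ 2 ≠ x m ^ 2) :
    (pa (fun m => (x m + η / 2) ^ 2) (fun m => (x m - η / 2) ^ 2) k).eval ((x k + η / 2) ^ 2)
    = phiFun η x (x k) *
      (pa (fun m => (x m - η / 2) ^ 2) (fun m => (x m + η / 2) ^ 2) k).eval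
      ((x k - η / 2) ^ 2) := by
  have ha := qa_eq η x k hη
  have hb := qb_eq η x k hη
  have hX : Xfun x (x k - η) ≠ 0 :=
    Finset.prod_ne_zero_iff.mpr fun m _ => sub_ne_zero.mpr (h2 m)
  unfold phiFun
  generalize (pa (fun m => (x m + η / 2) ^ 2) (fun m => (x m - η / 2) ^ 2) k).eval
    ((x k + η / 2) ^ 2) = qa at *
  generalize (pa (fun m => (x m - η / 2) ^ 2) (fun m => (x m + η / 2) ^ 2) k).eval
    ((x k - η / 2) ^ 2) = qb at *
  rw [div_mul_div_comm, div_mul_eq_mul_div, eq_div_iff (mul_ne_zero h1 hX)]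
  linear_combination Xfun x (x k - η) * ha - Xfun x (x k + η) * hb

lemma key {M N : ℕ} (η : ℂ) (hη : η ≠ 0)
    (x : Fin M → ℂ) (y : Fin (M + N) → ℂ)
    (hyx : ∀ (i : Fin (M + N)) (k : Fin M),
      (y i + η / 2) ^ 2 ≠ (x k + η / 2) ^ 2 ∧
      (y i + η / 2) ^ 2 ≠ (x k - η / 2) ^ 2 ∧
      (y i - η / 2) ^ 2 ≠ (x k + η / 2) ^ 2 ∧
      (y i - η / 2) ^ 2 ≠ (x k - η / 2) ^ 2)
    (hx1 : ∀ k : Fin M, 2 * x k + η ≠ 0)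
    (hx2 : ∀ k m : Fin M, (x k - η) ^ 2 ≠ x m ^ 2) (f : ℂ → ℂ)
    (a b : Fin M → ℂ) (ha : a = fun m => (x m + η / 2) ^ 2) (hb : b = fun m => (x m - η / 2) ^ 2) :
    (Matrix.of fun i j : Fin (M + (M + N)) =>
      f (Fin.append x y i) * (Fin.append x y i + η / 2) ^ (2 * (j : ℕ))
        + f (-Fin.append x y i) * (Fin.append x y i - η / 2) ^ (2 * (j : ℕ))).det
      * (Cm N a b).det * (-1) ^ M
    = (∏ i, Xfun x (y i)) * (Smat η x y f).det * ∏ k, (pa b a k).eval (b k) := by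
  rw [← Matrix.det_mul]
  have hE : (Matrix.of fun i j : Fin (M + (M + N)) =>
      f (Fin.append x y i) * (Fin.append x y i + η / 2) ^ (2 * (j : ℕ))
        + f (-Fin.append x y i) * (Fin.append x y i - η / 2) ^ (2 * (j : ℕ))) * Cm N a b
      = Matrix.of fun i k =>
        f (Fin.append x y i) * (P N a b k).eval ((Fin.append x y i + η / 2) ^ 2)
        + f (-Fin.append x y i) * (P N a b k).eval ((Fin.append x y i - η / 2) ^ 2) := by
    ext i k
    rw [Matrix.mul_apply, Matrix.of_apply, ← eval_P, ← eval_P, Finset.mul_sum, Finset.mul_sum,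
      ← Finset.sum_add_distrib]
    refine Finset.sum_congr rfl fun j _ => ?_
    rw [Matrix.of_apply, pow_mul, pow_mul]
    ring
  have haa : ∀ m, (x m + η / 2) ^ 2 = a m := fun m => by rw [ha]
  have hbb : ∀ m, (x m - η / 2) ^ 2 = b m := fun m => by rw [hb]
  rw [hE, ← Matrix.det_submatrix_equiv_self finSumFinEquiv]
  have hB : (Matrix.of fun i k =>
        f (Fin.append x y i) * (P N a b k).eval ((Fin.append x y i + η / 2) ^ 2)
        + f (-Fin.append x y i) * (P N a b k).eval
          ((Fin.append x y i - η / 2) ^ 2)).submatrix finSumFinEquiv finSumFinEquiv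
      = Matrix.fromBlocks (Matrix.diagonal fun k => f (x k) * (pa a b k).eval (a k))
        (Matrix.of fun k j => Fin.append (Pi.single k (f (-x k) * (pa b a k).eval (b k)))
          (fun _ : Fin N => (0 : ℂ)) j)
        (Matrix.of fun i k => f (y i) * (pa a b k).eval ((y i + η / 2) ^ 2)
          + f (-y i) * (pa a b k).eval ((y i - η / 2) ^ 2))
        (Matrix.of fun i k =>
          f (y i) * (Fin.append (pa b a) (fun j : Fin N => pt a b j) k).eval ((y i + η / 2) ^ 2)
          + f (-y i) * (Fin.append (pa b a) (fun j : Fin N => pt a b j) k).eval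
            ((y i - η / 2) ^ 2)) := by
    ext i j
    rcases i with i | i <;> rcases j with j | j
    · by_cases hij : i = j
      · subst hij; simp [P, haa, hbb, pa_eval_b]
      · simp [P, hij, haa, hbb, pa_eval_a, pa_eval_b]
    · refine Fin.addCases (fun m => ?_) (fun m => ?_) j
      · by_cases hij : m = i
        · subst hij; simp [P, haa, hbb, pa_eval_b]
        · simp [P, haa, hbb, pa_eval_b, pa_eval_a b a m i (Ne.symm hij), Pi.single_eq_of_ne hij]
      · simp [P, haa, hbb, pt_eval_a, pt_eval_b]
    · simp [P]
    · simp [P]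
  rw [hB, elim_gen]
  have hT : (∏ i, Xfun x (y i)) * (Smat η x y f).det * ∏ k, (pa b a k).eval (b k)
      = (Matrix.diagonal (fun i => Xfun x (y i)) * Smat η x y f *
        Matrix.diagonal (Fin.append (fun k => (pa b a k).eval (b k)) (fun _ : Fin N => 1))).det := by
    rw [Matrix.det_mul, Matrix.det_mul, Matrix.det_diagonal, Matrix.det_diagonal,
      Fin.prod_univ_add (f := Fin.append _ _)]
    simp
  rw [hT]
  congr 1
  ext i j
  rw [Matrix.mul_diagonal, Matrix.diagonal_mul]
  have hp : (∏ m, ((y i + η / 2) ^ 2 - a m)) * (∏ m, ((y i + η / 2) ^ 2 - b m))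
      = Xfun x (y i) * Xfun x (y i + η) := by
    rw [ha, hb]; exact X_mul η x (y i)
  have hm : (∏ m, ((y i - η / 2) ^ 2 - a m)) * (∏ m, ((y i - η / 2) ^ 2 - b m))
      = Xfun x (y i) * Xfun x (y i - η) := by
    rw [ha, hb]; exact X_mul' η x (y i)
  refine Fin.addCases (fun k => ?_) (fun k => ?_) j
  · obtain ⟨n1, n2, n3, n4⟩ := hyx i k
    rw [haa] at n1 n3
    rw [hbb] at n2 n4
    have e1 : (pa a b k).eval ((y i + η / 2) ^ 2)
        = Xfun x (y i) * Xfun x (y i + η) / ((y i + η / 2) ^ 2 - a k) := by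
      rw [eq_div_iff (sub_ne_zero.mpr n1), mul_comm, pa_eval_mul, hp]
    have e2 : (pa b a k).eval ((y i + η / 2) ^ 2)
        = Xfun x (y i) * Xfun x (y i + η) / ((y i + η / 2) ^ 2 - b k) := by
      rw [eq_div_iff (sub_ne_zero.mpr n2), mul_comm, pa_eval_mul, mul_comm, hp]
    have e3 : (pa a b k).eval ((y i - η / 2) ^ 2)
        = Xfun x (y i) * Xfun x (y i - η) / ((y i - η / 2) ^ 2 - a k) := by
      rw [eq_div_iff (sub_ne_zero.mpr n3), mul_comm, pa_eval_mul, hm]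
    have e4 : (pa b a k).eval ((y i - η / 2) ^ 2)
        = Xfun x (y i) * Xfun x (y i - η) / ((y i - η / 2) ^ 2 - b k) := by
      rw [eq_div_iff (sub_ne_zero.mpr n4), mul_comm, pa_eval_mul, mul_comm, hm]
    have e5 : (pa a b k).eval (a k) = phiFun η x (x k) * (pa b a k).eval (b k) := by
      rw [ha, hb]; exact qa_phi η x k hη (hx1 k) (hx2 k)
    have hS : Smat η x y f i (Fin.castAdd N k) =
      f (y i) * Xfun x (y i + η)
          * (f (-x k) / ((y i + η / 2) ^ 2 - a k)
             - f (x k) * phiFun η x (x k) / ((y i + η / 2) ^ 2 - b k))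
        + f (-y i) * Xfun x (y i - η)
          * (f (-x k) / ((y i - η / 2) ^ 2 - a k)
             - f (x k) * phiFun η x (x k) / ((y i - η / 2) ^ 2 - b k)) := by
      have hk : ((Fin.castAdd N k : Fin (M + N)) : ℕ) < M := k.2
      rw [Smat, Matrix.of_apply, dif_pos hk, ← haa, ← hbb]
      rfl
    simp only [Matrix.of_apply, Fin.append_left]
    rw [hS, e1, e2, e3, e4, e5]
    ring
  · have hS : Smat η x y f i (Fin.natAdd M k) =
      f (y i) * Xfun x (y i + η) * (y i + η / 2) ^ (2 * (k : ℕ))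
        + f (-y i) * Xfun x (y i - η) * (y i - η / 2) ^ (2 * (k : ℕ)) := by
      have hk : ¬ ((Fin.natAdd M k : Fin (M + N)) : ℕ) < M := by simp
      rw [Smat, Matrix.of_apply, dif_neg hk]
      simp
    simp only [Matrix.of_apply, Fin.append_right]
    rw [hS, pt_eval, pt_eval, hp, hm, pow_mul, pow_mul]
    ring

end Stmt15Aux

theorem stmt15 (M L : ℕ) (hML : M ≤ L) (η : ℂ) (hη : η ≠ 0)
    (x : Fin M → ℂ) (y : Fin L → ℂ)
    (hsq : ∀ i j : Fin (M + L), i ≠ j →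
      (Fin.append x y i) ^ 2 ≠ (Fin.append x y j) ^ 2)
    (hxsh : ∀ i j : Fin (M + M), i ≠ j →
      Fin.append (fun k => (x k + η / 2) ^ 2) (fun k => (x k - η / 2) ^ 2) i
        ≠ Fin.append (fun k => (x k + η / 2) ^ 2) (fun k => (x k - η / 2) ^ 2) j)
    (hyx : ∀ (i : Fin L) (k : Fin M),
      (y i + η / 2) ^ 2 ≠ (x k + η / 2) ^ 2 ∧
      (y i + η / 2) ^ 2 ≠ (x k - η / 2) ^ 2 ∧
      (y i - η / 2) ^ 2 ≠ (x k + η / 2) ^ 2 ∧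
      (y i - η / 2) ^ 2 ≠ (x k - η / 2) ^ 2)
    (hx1 : ∀ k : Fin M, 2 * x k + η ≠ 0)
    (hx2 : ∀ k m : Fin M, (x k - η) ^ 2 ≠ x m ^ 2) :
    ∀ f : ℂ → ℂ, Afun η (Fin.append x y) f = Sval η x y f := by
  
  open Stmt15Aux in
  intro f
  obtain ⟨N, rfl⟩ := Nat.exists_eq_add_of_le hML
  obtain ⟨a, ha⟩ : ∃ a : Fin M → ℂ, a = fun m => (x m + η / 2) ^ 2 := ⟨_, rfl⟩
  obtain ⟨b, hb⟩ : ∃ b : Fin M → ℂ, b = fun m => (x m - η / 2) ^ 2 := ⟨_, rfl⟩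
  have hk := key η hη x y hyx hx1 hx2 f a b ha hb
  have hC := det_Cm (N := N) a b
  rw [← ha, ← hb] at hxsh
  have hinj : Function.Injective (Fin.append a b) := by
    intro i j h
    by_contra hne
    exact hxsh i j hne h
  have hV := V_ne_zero _ hinj
  rw [V_append] at hV
  have hVa : V a ≠ 0 := left_ne_zero_of_mul (left_ne_zero_of_mul hV)
  have hVb : V b ≠ 0 := right_ne_zero_of_mul (left_ne_zero_of_mul hV)
  have hR : ∏ i, ∏ j, (b j - a i) ≠ 0 := right_ne_zero_of_mul hV
  have hsq2 : (fun i => Fin.append x y i ^ 2) = Fin.append (fun i => x i ^ 2) (fun i => y i ^ 2) := by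
    ext i
    refine Fin.addCases (fun m => ?_) (fun m => ?_) i <;> simp
  have hinj2 : Function.Injective (fun i => Fin.append x y i ^ 2) := by
    intro i j h
    by_contra hne
    exact hsq i j hne h
  have hden : (Matrix.of fun i j : Fin (M + (M + N)) => Fin.append x y i ^ (2 * (j : ℕ))).det
      = V (fun i => x i ^ 2) * V (fun i => y i ^ 2) * ∏ i, Xfun x (y i) := by
    have h1 : (∏ i, Xfun x (y i)) = ∏ i, ∏ j, (y j ^ 2 - x i ^ 2) := by
      unfold Xfun
      exact Finset.prod_comm
    rw [h1, ← V_append (fun i => x i ^ 2) (fun i => y i ^ 2), ← hsq2, V]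
    congr 1
    ext i j
    simp [Matrix.vandermonde_apply, pow_mul]
  have hd0 := V_ne_zero _ hinj2
  rw [hsq2, V_append] at hd0
  have hVx : V (fun i => x i ^ 2) ≠ 0 := left_ne_zero_of_mul (left_ne_zero_of_mul hd0)
  have hVy : V (fun i => y i ^ 2) ≠ 0 := right_ne_zero_of_mul (left_ne_zero_of_mul hd0)
  have hX : ∏ i, Xfun x (y i) ≠ 0 := by
    unfold Xfun
    rw [Finset.prod_comm]
    exact right_ne_zero_of_mul hd0
  have hqa := prod_pa a b
  have hqb : ∏ k, (pa b a k).eval (b k) ≠ 0 := by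
    rw [prod_pa b a]
    have hR' : ∏ i, ∏ j, (a j - b i) ≠ 0 := by
      rw [Finset.prod_comm]
      refine Finset.prod_ne_zero_iff.mpr fun i _ => Finset.prod_ne_zero_iff.mpr fun j _ => ?_
      have := Finset.prod_ne_zero_iff.mp (Finset.prod_ne_zero_iff.mp hR i (Finset.mem_univ i)) j
        (Finset.mem_univ j)
      rw [← neg_sub]
      exact neg_ne_zero.mpr this
    have hs : sg M ≠ 0 := fun h => by have := sg_sq M; simp [h] at this
    exact mul_ne_zero (mul_ne_zero hs (pow_ne_zero _ hVb))
      (mul_ne_zero (pow_ne_zero _ (by norm_num)) hR')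
  have hs2 := sg_sq M
  have hs0 : sg M ≠ 0 := fun h => by simp [h] at hs2
  unfold Afun Sval
  rw [hden, Vhat_eq, Vhat_eq, Vhat_eq, Vhat_eq, ← ha, ← hb, V_rev (fun i => x i ^ 2)]
  generalize Matrix.det (Matrix.of fun i j : Fin (M + (M + N)) =>
      f (Fin.append x y i) * (Fin.append x y i + η / 2) ^ (2 * (j : ℕ))
        + f (-Fin.append x y i) * (Fin.append x y i - η / 2) ^ (2 * (j : ℕ))) = A at *
  generalize (Smat η x y f).det = S at *
  generalize (Cm N a b).det = c at *
  generalize ∏ k, (pa b a k).eval (b k) = qb at *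
  rw [hqa] at hC
  generalize ∏ i, ∏ j, (b j - a i) = R at *
  generalize ∏ i, Xfun x (y i) = X at *
  generalize V (fun i => x i ^ 2) = vx at *
  generalize V (fun i => y i ^ 2) = vy at *
  generalize V a = va at *
  generalize V b = vb at *
  generalize sg M = s at *
  have he : ((-1 : ℂ) ^ M) * (-1) ^ M = 1 := by rw [← mul_pow]; simp
  generalize (-1 : ℂ) ^ M = e at *
  have hC' : vb * c = s * va * e * qb := by
    apply mul_left_cancel₀ (mul_ne_zero hVa hR)
    linear_combination hC
  have hA : A * s * va = X * S * vb := by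
    apply mul_left_cancel₀ hqb
    linear_combination vb * hk - A * e * hC' - A * s * va * qb * he
  field_simp
  linear_combination hA
end
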